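/- arXiv:2302.04179 — 3 statements merged into one kernel-verified Lean document; each statement's English description precedes it below -/
import Mathlib

section
/- Let g_1, …, g_r be vectors in ℝ^n, let α* ∈ Δ_r be a minimizer over Δ_r of the function α ↦ ‖Σ_{j=1}^r α_j g_j‖², and set q = Σ_{j=1}^r α*_j g_j. Then for every j ∈ {1, …, r}, ⟨g_j, q⟩ ≥ ‖q‖². -/
/-!
Moving from the minimizer `αs` towards the vertex `e_j` of the simplex moves `q` along
`q + t (g_j - q)`. A negative `⟪q, g_j - q⟫` would make the squared norm strictly decrease
for a small step `t ∈ (0, 1]`, contradicting minimality; hence `⟪g_j, q⟫ - ‖q‖² ≥ 0`.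
-/

open scoped RealInnerProductSpace BigOperators

/-- If `αs ∈ Δ_r` minimizes `α ↦ ‖∑ j α_j g_j‖²` over the standard simplex,
and `q = ∑ j αs_j g_j`, then `⟪g_j, q⟫ ≥ ‖q‖²` for every `j`. -/
theorem min_norm_convex_combination_inner_ge {n r : ℕ}
    (g : Fin r → EuclideanSpace ℝ (Fin n))
    (αs : Fin r → ℝ) (hαs : αs ∈ stdSimplex ℝ (Fin r))
    (hmin : ∀ β ∈ stdSimplex ℝ (Fin r),
      ‖∑ j, αs j • g j‖ ^ 2 ≤ ‖∑ j, β j • g j‖ ^ 2) :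
    ∀ j, ⟪g j, ∑ k, αs k • g k⟫ ≥ ‖∑ k, αs k • g k‖ ^ 2 := by
  intro j
  set q := ∑ k, αs k • g k with hq
  -- Minimality along the segment from `αs` to the vertex `e_j`: the quadratic
  -- `t ↦ ‖q + t (g_j - q)‖²` on `[0, 1]` is smallest at `t = 0`.
  have key : ∀ t : ℝ, 0 ≤ t → t ≤ 1 →
      0 ≤ 2 * t * ⟪q, g j - q⟫ + t ^ 2 * ‖g j - q‖ ^ 2 := by
    intro t ht0 ht1
    have hmem : (1 - t) • αs + t • Pi.single j (1 : ℝ) ∈ stdSimplex ℝ (Fin r) :=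
      convex_stdSimplex ℝ (Fin r) hαs (single_mem_stdSimplex ℝ j)
        (sub_nonneg.2 ht1) ht0 (by ring)
    have hsum : ∑ k, ((1 - t) • αs + t • Pi.single j (1 : ℝ) : Fin r → ℝ) k • g k
        = q + t • (g j - q) := by
      have hsingle : ∑ k, (Pi.single j (1 : ℝ) : Fin r → ℝ) k • g k = g j := by
        simp [Pi.single_apply]
      simp only [Pi.add_apply, Pi.smul_apply, smul_eq_mul, add_smul, mul_smul,
        Finset.sum_add_distrib, ← Finset.smul_sum, hsingle, ← hq]
      module
    have h := hmin _ hmem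
    rw [hsum, norm_add_sq_real, inner_smul_right, norm_smul, mul_pow,
      Real.norm_eq_abs, sq_abs] at h
    linarith
  have hinner : ⟪q, g j - q⟫ = ⟪g j, q⟫ - ‖q‖ ^ 2 := by
    rw [inner_sub_right, real_inner_self_eq_norm_sq, real_inner_comm]
  by_contra! hlt
  have hc : 0 < -⟪q, g j - q⟫ := by linarith
  set c := -⟪q, g j - q⟫ with hcdef
  set D := ‖g j - q‖ ^ 2 with hD
  have hD0 : 0 ≤ D := sq_nonneg _
  have hpos : 0 < c + D := by linarith
  -- The step `t = c / (c + D)` lies in `(0, 1]` and satisfies `t * D ≤ c`, so the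
  -- increment `t * (-2 * c + t * D)` is negative.
  have ht0 : 0 < c / (c + D) := div_pos hc hpos
  have ht1 : c / (c + D) ≤ 1 := (div_le_one hpos).2 (by linarith)
  have htD : c / (c + D) * D ≤ c := by
    rw [div_mul_eq_mul_div, div_le_iff₀ hpos]
    nlinarith
  have h := key _ ht0.le ht1
  rw [show ⟪q, g j - q⟫ = -c by rw [hcdef, neg_neg]] at h
  nlinarith [mul_le_mul_of_nonneg_left htD ht0.le, mul_pos ht0 hc]
end

section
/- Let f_1, …, f_r : ℝ^n → ℝ be differentiable at a point x, let α* ∈ Δ_r be a minimizer over Δ_r of α ↦ ‖Σ_{j=1}^r α_j ∇f_j(x)‖², and set q = Σ_{j=1}^r α*_j ∇f_j(x). If q ≠ 0, then −q is a common descent direction for all the f_j: for every j ∈ {1, …, r} there exists t₀ > 0 such that f_j(x − t q) < f_j(x) for all t ∈ (0, t₀). -/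
open scoped RealInnerProductSpace BigOperators

/-!
Write `q` for the minimum-norm point and `g j` for the gradient of `f j` at `x`. Moving from `q`
towards `g j` stays among the convex combinations of the gradients, so the norm cannot decrease to
first order: `⟪q, g j - q⟫ ≥ 0`, that is `⟪q, g j⟫ ≥ ‖q‖ ^ 2 > 0` (`norm_sq_le_inner_of_min`).
Hence the derivative of `f j` along `-q`, which is `-⟪g j, q⟫`, is negative, and `f j` decreases
on a short segment in that direction (`exists_descent_of_inner_pos`).
-/

/-- The first-order optimality condition at a point `q` of minimal norm on the segment `[q, g]`. -/
lemma norm_sq_le_inner_of_min {E : Type*} [NormedAddCommGroup E] [InnerProductSpace ℝ E] (q g : E)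
    (h : ∀ s : ℝ, 0 ≤ s → s ≤ 1 → ‖q‖ ^ 2 ≤ ‖q + s • (g - q)‖ ^ 2) :
    ‖q‖ ^ 2 ≤ inner ℝ q g := by
  by_contra! hlt
  set c : ℝ := inner ℝ q (g - q) with hc
  set D : ℝ := ‖g - q‖ ^ 2 with hD
  have hc0 : c < 0 := by
    rw [hc, inner_sub_right, real_inner_self_eq_norm_sq]
    linarith
  have hD0 : 0 ≤ D := sq_nonneg _
  have hpos : 0 < D - c := by linarith
  -- The increment of the squared norm at `s` is `s * (2 * c + s * D)`; this choice of `s`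
  -- lies in `(0, 1]` and makes `s * D ≤ -c`, also when `D = 0`.
  set s : ℝ := -c / (D - c) with hs
  have hs0 : 0 < s := div_pos (by linarith) hpos
  have hs1 : s ≤ 1 := by
    rw [hs, div_le_one hpos]
    linarith
  have hsD : s * (D - c) = -c := div_mul_cancel₀ _ hpos.ne'
  have hstep := h s hs0.le hs1
  rw [norm_add_sq_real, real_inner_smul_right, norm_smul, mul_pow, Real.norm_eq_abs, sq_abs,
    ← hc, ← hD] at hstep
  have hneg : 2 * c + s * D < 0 := by nlinarith
  nlinarith [mul_neg_of_pos_of_neg hs0 hneg]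

lemma exists_descent_of_inner_pos {E : Type*} [NormedAddCommGroup E] [InnerProductSpace ℝ E]
    [CompleteSpace E] {f : E → ℝ} {x q : E} (hf : DifferentiableAt ℝ f x)
    (hpos : 0 < inner ℝ q (gradient f x)) :
    ∃ t₀ > (0 : ℝ), ∀ t : ℝ, 0 < t → t < t₀ → f (x - t • q) < f x := by
  have hline : HasDerivAt (fun t : ℝ => x - t • q) (-q) 0 := by
    simpa using ((hasDerivAt_id (0 : ℝ)).smul_const q).const_sub x
  have hgrad : HasFDerivAt f (InnerProductSpace.toDual ℝ E (gradient f x)) (x - (0 : ℝ) • q) := by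
    simpa using hf.hasGradientAt.hasFDerivAt
  have hder : HasDerivAt (fun t : ℝ => f (x - t • q)) (-inner ℝ q (gradient f x)) 0 := by
    have := hgrad.comp_hasDerivAt (0 : ℝ) hline
    simpa [Function.comp_def, real_inner_comm] using this
  have hev := hder.tendsto_slope_zero_right.eventually_lt_const (neg_lt_zero.mpr hpos)
  obtain ⟨t₀, ht₀, hsub⟩ := mem_nhdsGT_iff_exists_Ioo_subset.mp hev
  refine ⟨t₀, ht₀, fun t ht htt => ?_⟩
  have hslope : t⁻¹ * (f (x - t • q) - f x) < 0 := by simpa using hsub ⟨ht, htt⟩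
  have := neg_of_mul_neg_right hslope (inv_pos.mpr ht).le
  linarith

/-- Lemma 1 of the paper. If `αs ∈ Δ_r` minimizes
`α ↦ ‖∑ j α_j ∇f_j(x)‖²` over the standard simplex and
`q = ∑ j αs_j ∇f_j(x) ≠ 0`, then `−q` is a common descent direction for all the `f_j`. -/
theorem min_norm_convex_combination_common_descent {n r : ℕ}
    (f : Fin r → EuclideanSpace ℝ (Fin n) → ℝ)
    (x : EuclideanSpace ℝ (Fin n))
    (hf : ∀ j, DifferentiableAt ℝ (f j) x)
    (αs : Fin r → ℝ) (hαs : αs ∈ stdSimplex ℝ (Fin r))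
    (hmin : ∀ β ∈ stdSimplex ℝ (Fin r),
      ‖∑ j, αs j • gradient (f j) x‖ ^ 2 ≤ ‖∑ j, β j • gradient (f j) x‖ ^ 2)
    (hq : (∑ j, αs j • gradient (f j) x) ≠ 0) :
    ∀ j, ∃ t₀ > (0 : ℝ), ∀ t : ℝ, 0 < t → t < t₀ →
      f j (x - t • ∑ k, αs k • gradient (f k) x) < f j x := by
  intro j
  refine exists_descent_of_inner_pos (hf j) ?_
  refine lt_of_lt_of_le (by positivity) (norm_sq_le_inner_of_min _ _ fun s hs0 hs1 => ?_)
  -- The point of the segment at parameter `s` has weights `(1 - s) • αs + s • e_j`.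
  have hmem := convex_stdSimplex ℝ (Fin r) hαs (single_mem_stdSimplex ℝ j)
    (sub_nonneg.mpr hs1) hs0 (sub_add_cancel 1 s)
  have hle := hmin _ hmem
  simp only [Pi.add_apply, Pi.smul_apply, smul_eq_mul, add_smul, mul_smul, Finset.sum_add_distrib,
    ← Finset.smul_sum, Pi.single_apply, ite_smul, one_smul, zero_smul, Finset.sum_ite_eq',
    Finset.mem_univ, if_true] at hle
  refine hle.trans_eq (congrArg (fun v => ‖v‖ ^ 2) ?_)
  module
end

section
/- Let F be a real n × r matrix such that FᵀF is invertible, let c = 𝟙ᵀ(FᵀF)⁻¹𝟙 where 𝟙 ∈ ℝ^r is the all-ones vector, and set α = (1/c)·(FᵀF)⁻¹𝟙. Then c > 0; and if moreover every entry of α is nonnegative, then α ∈ Δ_r and α minimizes β ↦ ‖Fβ‖² over Δ_r, i.e. ‖Fα‖² ≤ ‖Fβ‖² for every β ∈ Δ_r. -/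
open Matrix
open scoped BigOperators

/-!
Put `w = (FᵀF)⁻¹𝟙`, so that `FᵀF w = 𝟙` and hence `⟨Fw, Fβ⟩ = ∑ j, β j` for every `β`.
With `β = w` this gives `c = ‖Fw‖²`, which is positive because `Fw = 0` would force `𝟙 = 0`.
Since `α = c⁻¹ w`, the product `⟨Fα, Fβ⟩ = c⁻¹ ∑ j, β j` is constant on the hyperplane
`∑ j, β j = 1`; so `Fα` is orthogonal to `Fβ - Fα` there, and Pythagoras gives
`‖Fβ‖² = ‖Fα‖² + ‖Fβ - Fα‖²`.
-/

/-- Corollary 1 of the paper. Closed-form solution of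
`min_{β ∈ Δ_r} ‖Fβ‖²`: with `c = 𝟙ᵀ(FᵀF)⁻¹𝟙` and `α = (1/c)·(FᵀF)⁻¹𝟙`, one has `c > 0`, and
if all entries of `α` are nonnegative then `α ∈ Δ_r` and `α` minimizes `β ↦ ‖Fβ‖²` over `Δ_r`. -/
theorem closed_form_min_norm_simplex {n r : ℕ} (hr : 0 < r)
    (F : Matrix (Fin n) (Fin r) ℝ) (hF : IsUnit (Fᵀ * F).det)
    (c : ℝ) (hc : c = (fun _ => (1 : ℝ)) ⬝ᵥ ((Fᵀ * F)⁻¹ *ᵥ fun _ => (1 : ℝ)))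
    (α : Fin r → ℝ) (hα : α = c⁻¹ • ((Fᵀ * F)⁻¹ *ᵥ fun _ => (1 : ℝ))) :
    0 < c ∧
      ((∀ j, 0 ≤ α j) →
        α ∈ stdSimplex ℝ (Fin r) ∧
          ∀ β ∈ stdSimplex ℝ (Fin r),
            ∑ i, (F *ᵥ α) i ^ 2 ≤ ∑ i, (F *ᵥ β) i ^ 2) := by
  set w : Fin r → ℝ := (Fᵀ * F)⁻¹ *ᵥ fun _ => (1 : ℝ) with hw
  have hGw : (Fᵀ * F) *ᵥ w = fun _ => (1 : ℝ) := by
    rw [hw, mulVec_mulVec, mul_nonsing_inv _ hF, one_mulVec]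
  have key : ∀ β : Fin r → ℝ, (F *ᵥ w) ⬝ᵥ (F *ᵥ β) = ∑ j, β j := by
    intro β
    rw [dotProduct_mulVec, ← mulVec_transpose, mulVec_mulVec, hGw]
    simp [dotProduct]
  have hcsum : c = ∑ j, w j := by
    rw [hc]
    simp [dotProduct]
  have hcpos : 0 < c := by
    have hnonneg : 0 ≤ (F *ᵥ w) ⬝ᵥ (F *ᵥ w) :=
      Finset.sum_nonneg fun i _ => mul_self_nonneg _
    rw [hcsum, ← key w]
    refine lt_of_le_of_ne hnonneg fun h0 => ?_
    have hFw : F *ᵥ w = 0 := dotProduct_self_eq_zero.mp h0.symm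
    have h1 := congrFun hGw ⟨0, hr⟩
    rw [← mulVec_mulVec, hFw, mulVec_zero] at h1
    exact zero_ne_one h1
  have hαsum : ∑ j, α j = 1 := by
    simp only [hα, Pi.smul_apply, smul_eq_mul, ← Finset.mul_sum]
    rw [← hcsum, inv_mul_cancel₀ hcpos.ne']
  refine ⟨hcpos, fun hpos => ⟨⟨hpos, hαsum⟩, fun β hβ => ?_⟩⟩
  have keyα : ∀ γ : Fin r → ℝ, ∑ i, (F *ᵥ α) i * (F *ᵥ γ) i = c⁻¹ * ∑ j, γ j := by
    intro γ
    rw [← key γ, ← smul_eq_mul, ← smul_dotProduct, ← mulVec_smul, ← hα]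
    rfl
  have hcross : ∑ i, (F *ᵥ α) i * (F *ᵥ β) i = ∑ i, (F *ᵥ α) i ^ 2 := by
    simp only [pow_two]
    rw [keyα, keyα, hαsum, hβ.2]
  have hsq : 0 ≤ ∑ i, ((F *ᵥ β) i - (F *ᵥ α) i) ^ 2 :=
    Finset.sum_nonneg fun i _ => sq_nonneg _
  have hexp : ∑ i, ((F *ᵥ β) i - (F *ᵥ α) i) ^ 2
      = ∑ i, (F *ᵥ β) i ^ 2 - 2 * ∑ i, (F *ᵥ α) i * (F *ᵥ β) i + ∑ i, (F *ᵥ α) i ^ 2 := by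
    rw [Finset.mul_sum, ← Finset.sum_sub_distrib, ← Finset.sum_add_distrib]
    exact Finset.sum_congr rfl fun i _ => by ring
  linarith
end
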